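/- arXiv:1709.05685 — 2 statements merged into one kernel-verified Lean document; each statement's English description precedes it below -/
import Mathlib

section
/- Let A = F[x_1,...,x_{s+r-1}] be a polynomial ring over a field, H the r×s Hankel matrix in the x_i, I = I_t(H) with 1 ≤ t ≤ min{r,s}, and let d ≥ 1. If δ_1,...,δ_m are minors (of various sizes) of H with m ≤ d and Σ_i deg(δ_i) ≥ t·d, then δ_1···δ_m ∈ I^d. -/
set_option synthInstance.maxHeartbeats 1000000
set_option maxHeartbeats 1000000

open MvPolynomial Matrix

/-!
Write `I_k` for the ideal of `k`-minors of the Hankel matrix. If `I_u * I_(w+1) ≤ I_(u+1) * I_w`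
for `u ≤ w`, then in a product of `d` such ideals one may repeatedly raise a size below `t` at the
expense of a size above `t`; once all sizes are at least `t`, the product lies in `I_t ^ d`. Missing
factors are supplied by `I_0 = 1`.

The exchange rests on the fact of Gruson and Peskine that, as long as `k ≤ p` and `k ≤ q`, the
ideal of `k`-minors of the `p × q` Hankel matrix depends only on `p + q`. So `I_u` may be computed
with `u + 1` rows and `I_(w+1)` with `w + 1` rows. A `u`-minor of the former omits some row `i₀`,
while a `(w + 1)`-minor of the latter contains all rows, and Cramer's rule moves the row `i₀` from
the large minor to the small one.
-/

section OrderedMonoid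

variable {M : Type*} [CommMonoid M] [Preorder M] [MulLeftMono M] {J : ℕ → M}

theorem prod_map_le_pow_card_of_exchange (hanti : Antitone J)
    (hexch : ∀ u w, u ≤ w → J u * J (w + 1) ≤ J (u + 1) * J w) {t : ℕ} (S : Multiset ℕ)
    (hS : t * S.card ≤ S.sum) : (S.map J).prod ≤ J t ^ S.card := by
  induction hN : (S.map (t - ·)).sum using Nat.strong_induction_on generalizing S with
  | _ N ih =>
  by_cases hle : ∀ a ∈ S, t ≤ a
  · simpa using Multiset.prod_le_pow_card (S.map J) (J t) fun y hy => by
      obtain ⟨a, ha, rfl⟩ := Multiset.mem_map.1 hy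
      exact hanti (hle a ha)
  push Not at hle
  obtain ⟨a, haS, hat⟩ := hle
  obtain ⟨S₁, rfl⟩ := Multiset.exists_cons_of_mem haS
  have hbig : ∃ b ∈ S₁, t < b := by
    by_contra! h
    have := Multiset.sum_le_card_nsmul S₁ t h
    simp only [Multiset.card_cons, Multiset.sum_cons, smul_eq_mul] at this hS
    linarith
  obtain ⟨b, hbS, htb⟩ := hbig
  obtain ⟨S₂, rfl⟩ := Multiset.exists_cons_of_mem hbS
  obtain ⟨w, rfl⟩ : ∃ w, b = w + 1 := ⟨b - 1, by omega⟩
  have hsmoothed := ih _ ?_ ((a + 1) ::ₘ w ::ₘ S₂) ?_ rfl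
  · simp only [Multiset.map_cons, Multiset.prod_cons, Multiset.card_cons, ← mul_assoc]
      at hsmoothed ⊢
    exact (mul_le_mul_left (hexch a w (by omega)) _).trans hsmoothed
  · simp only [Multiset.map_cons, Multiset.sum_cons] at hN ⊢
    omega
  · simp only [Multiset.card_cons, Multiset.sum_cons] at hS ⊢
    omega

theorem prod_map_le_pow_of_exchange (hanti : Antitone J)
    (hexch : ∀ u w, u ≤ w → J u * J (w + 1) ≤ J (u + 1) * J w) (hzero : J 0 = 1) {t d : ℕ}
    (S : Multiset ℕ) (hcard : S.card ≤ d) (hsum : t * d ≤ S.sum) :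
    (S.map J).prod ≤ J t ^ d := by
  have hpad : (S + Multiset.replicate (d - S.card) 0).card = d := by simp [hcard]
  have hle := prod_map_le_pow_card_of_exchange hanti hexch (t := t)
    (S + Multiset.replicate (d - S.card) 0) (by simpa [hpad] using hsum)
  simpa only [hpad, Multiset.map_add, Multiset.map_replicate, Multiset.prod_add,
    Multiset.prod_replicate, hzero, one_pow, mul_one] using hle

end OrderedMonoid

section MinorIdeal

variable {R : Type*} [CommRing R] {α β : Type*}

theorem det_submatrix_eq_zero_of_not_injective_left {n : Type*} [Fintype n] [DecidableEq n]
    (M : Matrix α β R) {f : n → α} (g : n → β) (hf : ¬f.Injective) :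
    (M.submatrix f g).det = 0 := by
  obtain ⟨i, j, hij, hne⟩ := Function.not_injective_iff.1 hf
  exact det_zero_of_row_eq hne (by ext; simp [hij])

theorem det_submatrix_eq_det_one_submatrix_mul {n : Type*} [Fintype n] [DecidableEq n]
    (M : Matrix n β R) (f : n → n) (g : n → β) :
    (M.submatrix f g).det = ((1 : Matrix n n R).submatrix f id).det * (M.submatrix id g).det := by
  rw [← det_mul]
  congr 1
  ext i j
  simp [mul_apply, one_apply]

-- Both sides are the coefficient of `T ^ l` in `det (A + T • B)`.
theorem sum_det_replace_rows_eq_sum_det_replace_cols {n : Type*} [Fintype n] [DecidableEq n]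
    (A B : Matrix n n R) (l : ℕ) :
    ∑ E ∈ Finset.univ.powersetCard l, (of fun i j => if i ∈ E then B i j else A i j).det =
      ∑ E ∈ Finset.univ.powersetCard l, (of fun i j => if j ∈ E then B i j else A i j).det := by
  simp_rw [det_apply]
  rw [Finset.sum_comm, Finset.sum_comm (s := Finset.powersetCard l _)]
  refine Finset.sum_congr rfl fun σ _ => ?_
  refine Finset.sum_equiv σ.symm.finsetCongr (by simp [Finset.mem_powersetCard]) fun E _ => ?_
  simp

theorem det_submatrix_mul_det_submatrix_eq_sum {n : Type*} [Fintype n] [DecidableEq n] {u : ℕ}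
    (M : Matrix n β R) (c : n → β) (a : Fin u → n) (b : Fin u → β) {i₀ : n}
    (hi₀ : ∀ i, a i ≠ i₀) :
    (M.submatrix id c).det * (M.submatrix a b).det =
      ∑ j, (M.submatrix (Fin.cons i₀ a : Fin (u + 1) → n) (Fin.cons (c j) b)).det *
        (M.submatrix id c).adjugate j i₀ := by
  have hcramer (i : n) : ∑ j, (M.submatrix id c).adjugate j i₀ * M i (c j) =
      if i = i₀ then (M.submatrix id c).det else 0 := by
    simpa [mul_apply, one_apply, mul_comm] using
      congr_fun₂ (mul_adjugate (M.submatrix id c)) i i₀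
  let rows : Fin (u + 1) → n := Fin.cons i₀ a
  let cofactor (i : Fin (u + 1)) : R :=
    (-1) ^ (i : ℕ) * (M.submatrix (rows ∘ i.succAbove) b).det
  symm
  calc ∑ j, (M.submatrix rows (Fin.cons (c j) b)).det * (M.submatrix id c).adjugate j i₀
      = ∑ j, ∑ i, cofactor i * ((M.submatrix id c).adjugate j i₀ * M (rows i) (c j)) := by
        refine Finset.sum_congr rfl fun j _ => ?_
        rw [det_succ_column_zero, Finset.sum_mul]
        refine Finset.sum_congr rfl fun i _ => ?_
        rw [submatrix_submatrix, submatrix_apply]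
        change _ * M _ (c j) * (M.submatrix _ b).det * _ = _
        ring
    _ = ∑ i, cofactor i * if rows i = i₀ then (M.submatrix id c).det else 0 := by
      rw [Finset.sum_comm]
      simp_rw [← Finset.mul_sum, hcramer]
    _ = (M.submatrix id c).det * (M.submatrix a b).det := by
      rw [Fin.sum_univ_succ]
      simp only [rows, Fin.cons_zero, Fin.cons_succ, if_true, hi₀, if_false, mul_zero,
        Finset.sum_const_zero, add_zero]
      simp [cofactor, rows, Function.comp_def, mul_comm]

/-- The determinantal ideal `I_k(M)`. Rows and columns may be repeated or permuted: this only adds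
zero and signed copies of the usual generators. -/
def minorIdeal (M : Matrix α β R) (k : ℕ) : Ideal R :=
  Ideal.span {y | ∃ (f : Fin k → α) (g : Fin k → β), y = (M.submatrix f g).det}

theorem det_submatrix_mem_minorIdeal (M : Matrix α β R) {k : ℕ} (f : Fin k → α) (g : Fin k → β) :
    (M.submatrix f g).det ∈ minorIdeal M k :=
  Ideal.subset_span ⟨f, g, rfl⟩

theorem minorIdeal_le_iff {M : Matrix α β R} {k : ℕ} {J : Ideal R} :
    minorIdeal M k ≤ J ↔ ∀ (f : Fin k → α) (g : Fin k → β), (M.submatrix f g).det ∈ J := by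
  rw [minorIdeal, Ideal.span_le]
  exact ⟨fun h f g => h ⟨f, g, rfl⟩, by rintro h _ ⟨f, g, rfl⟩; exact h f g⟩

theorem minorIdeal_transpose (M : Matrix α β R) (k : ℕ) : minorIdeal Mᵀ k = minorIdeal M k := by
  refine le_antisymm (minorIdeal_le_iff.2 fun f g => ?_) (minorIdeal_le_iff.2 fun f g => ?_)
  · rw [← transpose_submatrix, det_transpose]
    exact det_submatrix_mem_minorIdeal M g f
  · rw [← det_transpose, transpose_submatrix]
    exact det_submatrix_mem_minorIdeal Mᵀ g f

theorem minorIdeal_zero (M : Matrix α β R) : minorIdeal M 0 = 1 := by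
  rw [Ideal.one_eq_top, Ideal.eq_top_iff_one]
  simpa using det_submatrix_mem_minorIdeal M (k := 0) Fin.elim0 Fin.elim0

theorem minorIdeal_antitone (M : Matrix α β R) : Antitone (minorIdeal M) := by
  refine antitone_nat_of_succ_le fun k => minorIdeal_le_iff.2 fun f g => ?_
  rw [det_succ_row_zero]
  exact Ideal.sum_mem _ fun j _ =>
    Ideal.mul_mem_left _ _ (det_submatrix_mem_minorIdeal M (f ∘ Fin.succ) (g ∘ j.succAbove))

theorem minorIdeal_eq_bot_of_card_lt_left [Fintype α] (M : Matrix α β R) {k : ℕ}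
    (hk : Fintype.card α < k) : minorIdeal M k = ⊥ :=
  eq_bot_iff.2 <| minorIdeal_le_iff.2 fun f g =>
    det_submatrix_eq_zero_of_not_injective_left M g fun hf =>
      hk.not_ge (by simpa using Fintype.card_le_of_injective f hf)

theorem minorIdeal_eq_bot_of_card_lt_right [Fintype β] (M : Matrix α β R) {k : ℕ}
    (hk : Fintype.card β < k) : minorIdeal M k = ⊥ := by
  rw [← minorIdeal_transpose, minorIdeal_eq_bot_of_card_lt_left _ hk]

theorem adjugate_mem_minorIdeal {w : ℕ} (M : Matrix (Fin (w + 1)) (Fin (w + 1)) R) (i j) :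
    M.adjugate i j ∈ minorIdeal M w := by
  rw [adjugate_fin_succ_eq_det_submatrix]
  exact Ideal.mul_mem_left _ _ (det_submatrix_mem_minorIdeal M _ _)

theorem minorIdeal_submatrix_le {α' β' : Type*} (M : Matrix α β R) (f : α' → α) (g : β' → β)
    (k : ℕ) : minorIdeal (M.submatrix f g) k ≤ minorIdeal M k :=
  minorIdeal_le_iff.2 fun f' g' => det_submatrix_mem_minorIdeal M (f ∘ f') (g ∘ g')

theorem minorIdeal_mul_minorIdeal_full_rows_le {β' : Type*} {u w : ℕ} (M : Matrix (Fin (w + 1)) β R)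
    {e : Fin (u + 1) → Fin (w + 1)} (he : e.Injective) (κ : β' → β) :
    minorIdeal (M.submatrix e id) u * minorIdeal (M.submatrix id κ) (w + 1) ≤
      minorIdeal (M.submatrix e id) (u + 1) * minorIdeal (M.submatrix id κ) w := by
  rw [minorIdeal, minorIdeal, Ideal.span_mul_span', Ideal.span_le]
  rintro _ ⟨_, ⟨a, b, rfl⟩, _, ⟨a', c, rfl⟩, rfl⟩
  obtain ⟨y, hy⟩ : ∃ y, ∀ i, a i ≠ y := by
    by_contra! h
    simpa using Fintype.card_le_of_surjective a h
  simp only [SetLike.mem_coe, submatrix_submatrix, Function.id_comp]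
  rw [det_submatrix_eq_det_one_submatrix_mul, mul_left_comm, mul_comm (det (M.submatrix (e ∘ a) b)),
    det_submatrix_mul_det_submatrix_eq_sum M (κ ∘ c) (e ∘ a) b (i₀ := e y) fun i => he.ne (hy i)]
  refine Ideal.mul_mem_left _ _ (Ideal.sum_mem _ fun j _ => Ideal.mul_mem_mul ?_ ?_)
  · have hrows : (Fin.cons (e y) (e ∘ a) : Fin (u + 1) → _) = e ∘ Fin.cons y a :=
      (Fin.comp_cons e y a).symm
    rw [hrows]
    exact det_submatrix_mem_minorIdeal (M.submatrix e id) _ _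
  · exact minorIdeal_submatrix_le (M.submatrix id κ) id c w (adjugate_mem_minorIdeal _ _ _)

end MinorIdeal

section CloseGap

variable {ι : Type*}

theorem piecewise_add_one_lt [DecidableEq ι] {a : ι → ℕ} {p : ℕ} (ha : ∀ i, a i < p) (E : Finset ι)
    (i : ι) : E.piecewise (a + 1) a i < p + 1 := by
  have := ha i
  by_cases hi : i ∈ E <;> simp only [hi, Finset.piecewise, if_true, if_false, Pi.add_apply,
    Pi.one_apply] <;> omega

/-- The column indices `b`, assumed to omit the value `c`, with those above `c` moved down by one.
This lets a minor with columns up to `q` be compared with minors whose columns are below `q`. -/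
def closeGap (c : ℕ) (b : ι → ℕ) (i : ι) : ℕ :=
  if c < b i then b i - 1 else b i

theorem closeGap_lt {b : ι → ℕ} {c q : ℕ} (hb : ∀ i, b i < q + 1) (hcq : c ≤ q)
    (hc : ∀ i, b i ≠ c) (i : ι) : closeGap c b i < q := by
  have := hb i
  have := hc i
  unfold closeGap
  split_ifs <;> omega

variable [Fintype ι] [DecidableEq ι]

theorem piecewise_closeGap (c : ℕ) (b : ι → ℕ) :
    ({i | c < b i} : Finset ι).piecewise (closeGap c b + 1) (closeGap c b) = b := by
  ext i
  by_cases hi : c < b i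
  · simp [closeGap, hi, Nat.sub_add_cancel (Nat.one_le_of_lt hi)]
  · simp [closeGap, hi]

theorem exists_lt_forall_piecewise_closeGap_ne {b : ι → ℕ} (hb : b.Injective) {c : ℕ}
    (hc : ∀ i, b i ≠ c) {E : Finset ι} (hcard : E.card = ({i | c < b i} : Finset ι).card)
    (hne : E ≠ ({i | c < b i} : Finset ι)) :
    ∃ j, c < b j ∧ ∀ i, E.piecewise (closeGap c b + 1) (closeGap c b) i ≠ b j := by
  have hdiff : (({i | c < b i} : Finset ι) \ E).Nonempty := by
    rw [Finset.sdiff_nonempty]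
    exact fun hsub => hne (Finset.eq_of_subset_of_card_le hsub hcard.le).symm
  obtain ⟨j, hj, hmax⟩ := Finset.exists_max_image _ b hdiff
  simp only [Finset.mem_sdiff, Finset.mem_filter_univ] at hj hmax
  refine ⟨j, hj.1, fun i hij => ?_⟩
  have := hc i
  by_cases hiE : i ∈ E <;> by_cases hi : c < b i <;>
    simp only [Finset.piecewise, hiE, if_true, if_false, Pi.add_apply, Pi.one_apply, closeGap, hi]
      at hij
  · exact hj.2 (hb (a₁ := i) (a₂ := j) (by omega) ▸ hiE)
  · omega
  · have := hmax i ⟨hi, hiE⟩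
    omega
  · omega

end CloseGap

section Hankel

variable {R : Type*}

/-- The infinite Hankel matrix of the sequence `x`, with rows and columns indexed from zero. Finite
Hankel matrices are its submatrices. -/
def hankel (x : ℕ → R) : Matrix ℕ ℕ R :=
  of fun i j => x (i + j)

theorem transpose_hankel (x : ℕ → R) : (hankel x)ᵀ = hankel x := by
  ext i j
  simp [hankel, add_comm]

variable [CommRing R]

/-- The ideal of `k`-minors of the `p × q` Hankel matrix of the sequence `x`. -/
def hankelIdeal (x : ℕ → R) (k p q : ℕ) : Ideal R :=
  minorIdeal ((hankel x).submatrix (Fin.val : Fin p → ℕ) (Fin.val : Fin q → ℕ)) k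

theorem hankelIdeal_comm (x : ℕ → R) (k p q : ℕ) : hankelIdeal x k p q = hankelIdeal x k q p := by
  rw [hankelIdeal, ← minorIdeal_transpose, transpose_submatrix, transpose_hankel, hankelIdeal]

theorem det_hankel_submatrix_mem_hankelIdeal (x : ℕ → R) {k p q : ℕ} {a b : Fin k → ℕ}
    (ha : ∀ i, a i < p) (hb : ∀ i, b i < q) :
    ((hankel x).submatrix a b).det ∈ hankelIdeal x k p q :=
  det_submatrix_mem_minorIdeal ((hankel x).submatrix (Fin.val : Fin p → ℕ) (Fin.val : Fin q → ℕ))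
    (fun i => ⟨a i, ha i⟩) (fun i => ⟨b i, hb i⟩)

theorem sum_det_hankel_shift_rows_eq_sum_det_hankel_shift_cols (x : ℕ → R) {ι : Type*} [Fintype ι]
    [DecidableEq ι] (a b : ι → ℕ) (l : ℕ) :
    ∑ E ∈ Finset.univ.powersetCard l, ((hankel x).submatrix (E.piecewise (a + 1) a) b).det =
      ∑ E ∈ Finset.univ.powersetCard l, ((hankel x).submatrix a (E.piecewise (b + 1) b)).det := by
  convert sum_det_replace_rows_eq_sum_det_replace_cols ((hankel x).submatrix a b)
    ((hankel x).submatrix (a + 1) b) l using 4 with E _ E _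
  · ext i j
    by_cases hi : i ∈ E <;> simp [hankel, hi]
  · ext i j
    by_cases hj : j ∈ E <;> simp [hankel, hj, add_assoc, add_comm 1]

theorem det_hankel_submatrix_mem_hankelIdeal_of_forall_ne (x : ℕ → R) {k p q c : ℕ}
    {a b : Fin k → ℕ} (ha : ∀ i, a i < p) (hb : ∀ i, b i < q + 1) (hcq : c ≤ q)
    (hc : ∀ i, b i ≠ c) : ((hankel x).submatrix a b).det ∈ hankelIdeal x k (p + 1) q := by
  induction hn : q - c using Nat.strong_induction_on generalizing b c with
  | _ n ih =>
  by_cases hinj : b.Injective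
  swap
  · rw [← det_transpose, transpose_submatrix,
      det_submatrix_eq_zero_of_not_injective_left _ _ hinj]
    exact Ideal.zero_mem _
  have hgap := closeGap_lt hb hcq hc
  let top : Finset (Fin k) := {i | c < b i}
  have hsum : ∑ E ∈ Finset.univ.powersetCard top.card,
      ((hankel x).submatrix a (E.piecewise (closeGap c b + 1) (closeGap c b))).det ∈
        hankelIdeal x k (p + 1) q := by
    rw [← sum_det_hankel_shift_rows_eq_sum_det_hankel_shift_cols]
    exact Ideal.sum_mem _ fun E _ =>
      det_hankel_submatrix_mem_hankelIdeal x (piecewise_add_one_lt ha E) hgap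
  -- The term of `top` is the given minor; in every other term the columns omit a value above `c`.
  rw [← Finset.add_sum_erase _ _ (a := top) (by simp), piecewise_closeGap] at hsum
  refine (Ideal.add_mem_iff_left _ (Ideal.sum_mem _ fun E hE => ?_)).1 hsum
  obtain ⟨hne, hcard⟩ : E ≠ top ∧ E.card = top.card := by simpa using hE
  obtain ⟨j, hcj, hj⟩ := exists_lt_forall_piecewise_closeGap_ne hinj hc hcard hne
  have hjq := hb j
  exact ih (q - b j) (by omega) (piecewise_add_one_lt hgap E) (by omega) hj rfl

theorem hankelIdeal_succ_right_le (x : ℕ → R) {k p q : ℕ} (hk : k ≤ q) :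
    hankelIdeal x k p (q + 1) ≤ hankelIdeal x k (p + 1) q := by
  refine minorIdeal_le_iff.2 fun f g => ?_
  obtain ⟨c, hc⟩ : ∃ c, ∀ i, g i ≠ c := by
    by_contra! h
    have := Fintype.card_le_of_surjective g h
    simp only [Fintype.card_fin] at this
    omega
  exact det_hankel_submatrix_mem_hankelIdeal_of_forall_ne x (fun i => (f i).2) (fun i => (g i).2)
    c.is_le fun i => Fin.val_ne_of_ne (hc i)

theorem hankelIdeal_add_right_le (x : ℕ → R) {k q : ℕ} (hk : k ≤ q) (p e : ℕ) :
    hankelIdeal x k p (q + e) ≤ hankelIdeal x k (p + e) q := by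
  induction e generalizing p with
  | zero => exact le_rfl
  | succ e ih =>
    calc hankelIdeal x k p (q + e + 1)
        ≤ hankelIdeal x k (p + 1) (q + e) := hankelIdeal_succ_right_le x (by omega)
      _ ≤ hankelIdeal x k (p + 1 + e) q := ih (p + 1)
      _ = hankelIdeal x k (p + (e + 1)) q := by rw [add_assoc, add_comm 1]

theorem hankelIdeal_le_of_add_eq_add (x : ℕ → R) {k p q p' q' : ℕ} (h : p + q = p' + q')
    (hp : k ≤ p') (hq : k ≤ q') : hankelIdeal x k p q ≤ hankelIdeal x k p' q' := by
  rcases le_total q' q with hqq | hqq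
  · obtain ⟨e, rfl⟩ := Nat.exists_eq_add_of_le hqq
    obtain rfl : p' = p + e := by omega
    exact hankelIdeal_add_right_le x hq p e
  · obtain ⟨e, rfl⟩ := Nat.exists_eq_add_of_le hqq
    obtain rfl : p = p' + e := by omega
    rw [hankelIdeal_comm x k (p' + e), hankelIdeal_comm x k p']
    exact hankelIdeal_add_right_le x hp q e

theorem hankelIdeal_mul_hankelIdeal_full_rows_le (x : ℕ → R) {u w q q' : ℕ} (huw : u ≤ w)
    (hq : q' ≤ q) :
    hankelIdeal x u (u + 1) q * hankelIdeal x (w + 1) (w + 1) q' ≤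
      hankelIdeal x (u + 1) (u + 1) q * hankelIdeal x w (w + 1) q' :=
  minorIdeal_mul_minorIdeal_full_rows_le
    ((hankel x).submatrix (Fin.val : Fin (w + 1) → ℕ) (Fin.val : Fin q → ℕ))
    (Fin.castLE_injective (Nat.succ_le_succ huw)) (Fin.castLE hq)

theorem hankelIdeal_mul_hankelIdeal_succ_le (x : ℕ → R) (r s : ℕ) {u w : ℕ} (huw : u ≤ w) :
    hankelIdeal x u r s * hankelIdeal x (w + 1) r s ≤
      hankelIdeal x (u + 1) r s * hankelIdeal x w r s := by
  rcases lt_or_ge r (w + 1) with hr | hr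
  · rw [hankelIdeal.eq_def x (w + 1), minorIdeal_eq_bot_of_card_lt_left _ (by simpa using hr),
      Ideal.mul_bot]
    exact bot_le
  rcases lt_or_ge s (w + 1) with hs | hs
  · rw [hankelIdeal.eq_def x (w + 1), minorIdeal_eq_bot_of_card_lt_right _ (by simpa using hs),
      Ideal.mul_bot]
    exact bot_le
  calc hankelIdeal x u r s * hankelIdeal x (w + 1) r s
      ≤ hankelIdeal x u (u + 1) (r + s - (u + 1)) *
          hankelIdeal x (w + 1) (w + 1) (r + s - (w + 1)) := by
        gcongr <;> apply hankelIdeal_le_of_add_eq_add <;> omega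
    _ ≤ hankelIdeal x (u + 1) (u + 1) (r + s - (u + 1)) *
          hankelIdeal x w (w + 1) (r + s - (w + 1)) :=
        hankelIdeal_mul_hankelIdeal_full_rows_le x huw (by omega)
    _ ≤ hankelIdeal x (u + 1) r s * hankelIdeal x w r s := by
        gcongr <;> apply hankelIdeal_le_of_add_eq_add <;> omega

theorem hankel_minor_product_mem_power_general {ι : Type*} [Fintype ι] {r s t d : ℕ} (x : ℕ → R)
    {H : Matrix (Fin r) (Fin s) R} (hH : ∀ a b, H a b = x (a + b)) {u : ι → ℕ}
    (f : ∀ i, Fin (u i) → Fin r) (g : ∀ i, Fin (u i) → Fin s)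
    (hcard : Fintype.card ι ≤ d) (hdeg : t * d ≤ ∑ i, u i) :
    ∏ i, (H.submatrix (f i) (g i)).det ∈ minorIdeal H t ^ d := by
  obtain rfl : H = (hankel x).submatrix Fin.val Fin.val := Matrix.ext hH
  have hle := prod_map_le_pow_of_exchange (minorIdeal_antitone _)
    (fun u w huw => hankelIdeal_mul_hankelIdeal_succ_le x r s huw) (minorIdeal_zero _)
    (Finset.univ.val.map u) (by simpa using hcard) hdeg
  rw [Multiset.map_map] at hle
  exact hle (Ideal.prod_mem_prod fun i _ => det_submatrix_mem_minorIdeal _ (f i) (g i))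

end Hankel

/-- If `δ_1,...,δ_m` are minors (of sizes `u 1,...,u m`) of the `r×s` Hankel matrix `H`, with
`m ≤ d` and `Σ u i ≥ t·d`, then `δ_1···δ_m ∈ I_t(H)^d`. -/
theorem hankel_minor_product_mem_power (F : Type*) [Field F] (r s t d m : ℕ)
    (hr : 1 ≤ r) (htr : t ≤ r) (hts : t ≤ s) (h1t : 1 ≤ t) (hd : 1 ≤ d)
    (H : Matrix (Fin r) (Fin s) (MvPolynomial (Fin (s + r - 1)) F))
    (hH : ∀ a b, H a b = X ⟨(a : ℕ) + (b : ℕ), by have := a.2; have := b.2; omega⟩)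
    (I : Ideal (MvPolynomial (Fin (s + r - 1)) F))
    (hI : I = Ideal.span {x | ∃ (f : Fin t → Fin r) (g : Fin t → Fin s),
      x = (H.submatrix f g).det})
    (u : Fin m → ℕ) (f : ∀ i, Fin (u i) → Fin r) (g : ∀ i, Fin (u i) → Fin s)
    (hf : ∀ i, StrictMono (f i)) (hg : ∀ i, StrictMono (g i))
    (hm : m ≤ d) (hdeg : t * d ≤ ∑ i, u i) :
    (∏ i, (H.submatrix (f i) (g i)).det) ∈ I ^ d := by
  subst hI
  exact hankel_minor_product_mem_power_general
    (fun n => if hn : n < s + r - 1 then X ⟨n, hn⟩ else 0)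
    (fun a b => by rw [hH, dif_pos]) f g (by simpa using hm) hdeg
end

section
/- Let H be a t×n Hankel matrix of indeterminates over a field F of characteristic p > 0, with t ≤ n. Then the F-pure threshold of the ideal I_t(H) in F[x_1,...,x_{n+t-1}] equals min{ (n+t-2i+1)/(t-i+1) : i = 1,...,t }. -/
set_option synthInstance.maxHeartbeats 1000000
set_option maxHeartbeats 1000000

open MvPolynomial Matrix Filter

/-!
Order the variables so that `X 0` is lexicographically largest. A minor of a Hankel matrix then has
its diagonal product as leading term, and the diagonal products of the `t`-minors are exactly the
squarefree monomials of degree `t` whose support contains no two consecutive indices. If `t < n`,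
the `N = n + t - 1` cyclic translates of `{0, 2, …, 2t - 2}` are such supports and together cover
every variable exactly `t` times, so the product of the corresponding minors has leading term
`(∏ X i) ^ t`; with `I ⊆ m ^ t` this pinches the threshold at `N / t`, the value at `i = 1`. If
`t = n`, the ideal is generated by the determinant, which has a squarefree leading term, and the
threshold is `1`, the value at `i = t`.
-/

section FThreshold

variable {A : Type*} [CommSemiring A]

/-- The bracket power `J^{[q]}`, generated by the `q`-th powers of all elements of `J`. It is the
Frobenius power of `J` when `q` is a power of the characteristic. -/
def frobeniusPower (J : Ideal A) (q : ℕ) : Ideal A :=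
  Ideal.span ((fun a ↦ a ^ q) '' (J : Set A))

/-- `c` is the `F`-threshold `c^K(J)`, the limit of `ν_e / p ^ e` where `ν_e` is the largest `r`
with `J ^ r ⊄ K^{[p ^ e]}`. For `K` the homogeneous maximal ideal of a polynomial ring over a field
this is the `F`-pure threshold of `J`. The existence of every `ν_e` is part of the definition. -/
def HasFThreshold (p : ℕ) (J K : Ideal A) (c : ℝ) : Prop :=
  ∃ ν : ℕ → ℕ,
    (∀ e, ¬ J ^ ν e ≤ frobeniusPower K (p ^ e) ∧ J ^ (ν e + 1) ≤ frobeniusPower K (p ^ e)) ∧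
    Tendsto (fun e ↦ (ν e : ℝ) / (p ^ e : ℝ)) atTop (nhds c)

lemma exists_not_pow_le_and_pow_succ_le {J K : Ideal A} {a b : ℕ} (ha : ¬ J ^ a ≤ K)
    (hb : J ^ b ≤ K) : ∃ r, a ≤ r ∧ r < b ∧ ¬ J ^ r ≤ K ∧ J ^ (r + 1) ≤ K := by
  have hab : a ≤ b := by
    by_contra! h
    exact ha ((Ideal.pow_le_pow_right h.le).trans hb)
  induction b, hab using Nat.le_induction with
  | base => exact absurd hb ha
  | succ b hab ih =>
    by_cases h : J ^ b ≤ K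
    · obtain ⟨r, har, hrb, hr⟩ := ih h
      exact ⟨r, har, hrb.trans b.lt_succ_self, hr⟩
    · exact ⟨b, hab, b.lt_succ_self, h, hb⟩

lemma tendsto_div_of_abs_sub_mul_le {ι : Type*} {l : Filter ι} {f u : ι → ℝ} {c C : ℝ}
    (hu : Tendsto u l atTop) (h : ∀ i, |f i - c * u i| ≤ C) :
    Tendsto (fun i ↦ f i / u i) l (nhds c) := by
  rw [tendsto_iff_norm_sub_tendsto_zero]
  refine squeeze_zero' (Eventually.of_forall fun _ ↦ norm_nonneg _) ?_ (hu.const_div_atTop C)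
  filter_upwards [hu.eventually_gt_atTop 0] with i hi
  rw [Real.norm_eq_abs, div_sub' hi.ne', abs_div, abs_of_pos hi, mul_comm]
  gcongr
  exact h i

theorem hasFThreshold_of_bounds {p : ℕ} (hp : 1 < p) {J K : Ideal A} {c C : ℝ}
    (hlow : ∀ e, ∃ a : ℕ, c * p ^ e - C ≤ a ∧ ¬ J ^ a ≤ frobeniusPower K (p ^ e))
    (hup : ∀ e, ∃ b : ℕ, b ≤ c * p ^ e + C ∧ J ^ b ≤ frobeniusPower K (p ^ e)) :
    HasFThreshold p J K c := by
  have hν (e : ℕ) : ∃ r : ℕ, |(r : ℝ) - c * p ^ e| ≤ C ∧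
      ¬ J ^ r ≤ frobeniusPower K (p ^ e) ∧ J ^ (r + 1) ≤ frobeniusPower K (p ^ e) := by
    obtain ⟨a, hac, ha⟩ := hlow e
    obtain ⟨b, hbc, hb⟩ := hup e
    obtain ⟨r, har, hrb, hr⟩ := exists_not_pow_le_and_pow_succ_le ha hb
    have har' : (a : ℝ) ≤ r := mod_cast har
    have hrb' : (r : ℝ) ≤ b := mod_cast hrb.le
    exact ⟨r, abs_le.2 ⟨by linarith, by linarith⟩, hr⟩
  choose ν hclose hν using hν
  exact ⟨ν, hν, tendsto_div_of_abs_sub_mul_le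
    (tendsto_pow_atTop_atTop_of_one_lt (mod_cast hp)) hclose⟩

lemma span_singleton_pow_le_frobeniusPower {K : Ideal A} {f : A} (hf : f ∈ K) (q : ℕ) :
    Ideal.span {f} ^ q ≤ frobeniusPower K q := by
  rw [Ideal.span_singleton_pow, Ideal.span_singleton_le_iff_mem]
  exact Ideal.subset_span ⟨f, hf, rfl⟩

end FThreshold

section PowersOfVariables

variable {σ R : Type*} [CommSemiring R]

theorem frobeniusPower_idealOfVars (p e : ℕ) [ExpChar R p] :
    frobeniusPower (idealOfVars σ R) (p ^ e) = Ideal.span (Set.range fun i ↦ X i ^ p ^ e) := by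
  change Ideal.map (iterateFrobenius (MvPolynomial σ R) p e) (Ideal.span (Set.range X)) = _
  rw [Ideal.map_span, ← Set.range_comp]
  rfl

lemma mem_span_range_X_pow_iff {q : ℕ} {f : MvPolynomial σ R} :
    f ∈ Ideal.span (Set.range fun i ↦ X i ^ q) ↔ ∀ d ∈ f.support, ∃ i, q ≤ d i := by
  have hrange : (Set.range fun i ↦ X i ^ q) =
      (fun d ↦ monomial d (1 : R)) '' Set.range fun i : σ ↦ Finsupp.single i q := by
    simp only [X_pow_eq_monomial, ← Set.range_comp, Function.comp_def]
  rw [hrange, mem_ideal_span_monomial_image]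
  simp

theorem idealOfVars_pow_le_span_range_X_pow [Fintype σ] {q s : ℕ}
    (hs : Fintype.card σ * (q - 1) < s) :
    idealOfVars σ R ^ s ≤ Ideal.span (Set.range fun i ↦ X i ^ q) := by
  intro f hf
  rw [mem_span_range_X_pow_iff]
  intro d hd
  by_contra! hlt
  have hdeg : d.degree ≤ Fintype.card σ * (q - 1) := by
    rw [Finsupp.degree_eq_sum]
    simpa using Finset.sum_le_card_nsmul Finset.univ d (q - 1) fun i _ ↦
      Nat.le_sub_one_of_lt (hlt i)
  have := (mem_pow_idealOfVars_iff s f).1 hf d hd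
  omega

lemma notMem_span_range_X_pow_of_degree_lt [Nontrivial R] {m : MonomialOrder σ} {q : ℕ}
    {f : MvPolynomial σ R} (hf : m.Monic f) (hdeg : ∀ i, m.degree f i < q) :
    f ∉ Ideal.span (Set.range fun i ↦ X i ^ q) := by
  rw [mem_span_range_X_pow_iff]
  intro h
  obtain ⟨i, hi⟩ := h _ (m.degree_mem_support hf.ne_zero)
  exact (hdeg i).not_ge hi

end PowersOfVariables

section LeadingTerms

lemma degree_prod_of_monic {ι σ R : Type*} [CommSemiring R] {m : MonomialOrder σ}
    {f : ι → MvPolynomial σ R} {s : Finset ι} (hf : ∀ i ∈ s, m.Monic (f i)) :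
    m.degree (∏ i ∈ s, f i) = ∑ i ∈ s, m.degree (f i) :=
  MonomialOrder.degree_prod_of_regular fun i hi ↦ by
    rw [(hf i hi).leadingCoeff_eq_one]; exact isRegular_one

lemma degree_pow_of_monic {σ R : Type*} [CommSemiring R] {m : MonomialOrder σ}
    {f : MvPolynomial σ R} (hf : m.Monic f) (k : ℕ) : m.degree (f ^ k) = k • m.degree f := by
  simpa using degree_prod_of_monic (s := Finset.range k) fun _ _ ↦ hf

lemma monic_and_degree_eq_of_forall_le {σ R : Type*} [CommSemiring R] [Nontrivial R]
    {m : MonomialOrder σ} {f : MvPolynomial σ R} {d : σ →₀ ℕ} (hcoeff : coeff d f = 1)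
    (hle : ∀ c ∈ f.support, m.toSyn c ≤ m.toSyn d) : m.Monic f ∧ m.degree f = d := by
  have hdeg : m.degree f = d := m.toSyn.injective <|
    le_antisymm (m.degree_le_iff.2 hle) (m.le_degree (by simp [hcoeff]))
  exact ⟨by rw [MonomialOrder.Monic, MonomialOrder.leadingCoeff, hdeg, hcoeff], hdeg⟩

lemma exists_fixed_below_and_diag_lt {ι : Type*} [LinearOrder ι] [WellFoundedLT ι]
    {τ : Equiv.Perm ι} (hτ : τ ≠ 1) :
    ∃ k, (∀ i < k, τ i = i) ∧ ∀ i, k ≤ i → (k, k) < (τ i, i) := by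
  have hmoved : {i | τ i ≠ i}.Nonempty := by
    by_contra! h
    exact hτ (Equiv.ext fun i ↦ by simpa using Set.eq_empty_iff_forall_notMem.1 h i)
  obtain ⟨k, hk, hmin⟩ := wellFounded_lt.has_min _ hmoved
  have hfix : ∀ i < k, τ i = i := fun i hi ↦ by_contra fun h ↦ hmin i h hi
  refine ⟨k, hfix, fun i hi ↦ lt_of_le_of_ne ⟨?_, hi⟩ ?_⟩
  · by_contra! h
    exact (τ.injective (hfix _ h) ▸ h).not_ge hi
  · intro h
    obtain ⟨hτi, rfl⟩ := Prod.mk.inj h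
    exact hk hτi.symm

variable {ι σ : Type*} [Fintype ι] [LinearOrder ι] [LinearOrder σ] {a : ι × ι → σ}

theorem toLex_sum_single_perm_lt (ha : StrictMono a) {τ : Equiv.Perm ι} (hτ : τ ≠ 1) :
    toLex (∑ i, Finsupp.single (a (τ i, i)) 1 : σ →₀ ℕ) <
      toLex (∑ i, Finsupp.single (a (i, i)) 1) := by
  obtain ⟨k, hfix, hlt⟩ := exists_fixed_below_and_diag_lt hτ
  have hoff : ∀ i, k ≤ i → a (k, k) < a (τ i, i) := fun i hi ↦ ha (hlt i hi)
  have hdiag : ∀ i, k ≤ i → a (k, k) ≤ a (i, i) := fun i hi ↦ ha.monotone ⟨hi, hi⟩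
  rw [Finsupp.Lex.lt_iff]
  refine ⟨a (k, k), fun u hu ↦ ?_, ?_⟩ <;> simp only [ofLex_toLex, Finsupp.finsetSum_apply]
  · refine Finset.sum_congr rfl fun i _ ↦ ?_
    rcases lt_or_ge i k with hi | hi
    · rw [hfix i hi]
    · rw [Finsupp.single_eq_of_ne (hu.trans (hoff i hi)).ne,
        Finsupp.single_eq_of_ne (hu.trans_le (hdiag i hi)).ne]
  · refine Finset.sum_lt_sum (fun i _ ↦ ?_) ⟨k, Finset.mem_univ k, ?_⟩
    · rcases lt_or_ge i k with hi | hi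
      · rw [hfix i hi]
      · rw [Finsupp.single_eq_of_ne (hoff i hi).ne]
        exact Nat.zero_le _
    · rw [Finsupp.single_eq_of_ne (hoff k le_rfl).ne, Finsupp.single_eq_same]
      exact Nat.one_pos

theorem monic_and_degree_det_of_X {R : Type*} [CommRing R] [Nontrivial R] [WellFoundedGT σ]
    (ha : StrictMono a) :
    MonomialOrder.lex.Monic (of fun i j ↦ (X (a (i, j)) : MvPolynomial σ R)).det ∧
      MonomialOrder.lex.degree (of fun i j ↦ (X (a (i, j)) : MvPolynomial σ R)).det =
        ∑ i, Finsupp.single (a (i, i)) 1 := by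
  set d : Equiv.Perm ι → σ →₀ ℕ := fun τ ↦ ∑ i, Finsupp.single (a (τ i, i)) 1 with hd
  have hlt : ∀ τ ≠ 1, toLex (d τ) < toLex (d 1) := fun τ hτ ↦ toLex_sum_single_perm_lt ha hτ
  have hdet : (of fun i j ↦ (X (a (i, j)) : MvPolynomial σ R)).det =
      ∑ τ : Equiv.Perm ι, monomial (d τ) ((Equiv.Perm.sign τ : ℤ) : R) := by
    refine (det_apply' _).trans (Finset.sum_congr rfl fun τ _ ↦ ?_)
    rw [← mul_one ((Equiv.Perm.sign τ : ℤ) : R), ← C_mul_monomial, hd, monomial_sum_one]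
    simp [X]
  refine monic_and_degree_eq_of_forall_le (d := d 1) ?_ fun c hc ↦ ?_
  · rw [hdet, coeff_sum, Finset.sum_eq_single_of_mem 1 (Finset.mem_univ _)]
    · simp
    · intro τ _ hτ
      rw [coeff_monomial, if_neg fun h ↦ (hlt τ hτ).ne (congrArg toLex h)]
  · rw [hdet] at hc
    obtain ⟨τ, -, hτ⟩ := Finset.mem_biUnion.1 (support_sum hc)
    obtain rfl := Finset.mem_singleton.1 (support_monomial_subset hτ)
    rcases eq_or_ne τ 1 with rfl | h
    · rfl
    · exact (hlt τ h).le

end LeadingTerms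

section MaximalMinors

variable {A : Type*} [CommRing A] {t n : ℕ}

/-- The ideal `I_t(H)` generated by the `t × t` minors of a matrix `H` with `t` rows. All functions
`g` choosing columns are allowed, which only adds zeros and sign changes of minors. -/
def maximalMinors (H : Matrix (Fin t) (Fin n) A) : Ideal A :=
  Ideal.span (Set.range fun g : Fin t → Fin n ↦ (H.submatrix id g).det)

lemma det_mem_maximalMinors (H : Matrix (Fin t) (Fin n) A) (g : Fin t → Fin n) :
    (H.submatrix id g).det ∈ maximalMinors H :=
  Ideal.subset_span ⟨g, rfl⟩

lemma det_mem_pow_card {ι : Type*} [Fintype ι] [DecidableEq ι] {J : Ideal A} {M : Matrix ι ι A}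
    (hM : ∀ i j, M i j ∈ J) : M.det ∈ J ^ Fintype.card ι := by
  rw [det_apply]
  refine Ideal.sum_mem _ fun τ _ ↦ ?_
  rw [Units.smul_def]
  refine zsmul_mem ?_ _
  simpa using Ideal.prod_mem_prod (s := Finset.univ) (I := fun _ ↦ J) fun i _ ↦ hM (τ i) i

lemma maximalMinors_le_pow {J : Ideal A} {H : Matrix (Fin t) (Fin n) A} (hH : ∀ a b, H a b ∈ J) :
    maximalMinors H ≤ J ^ t := by
  rw [maximalMinors, Ideal.span_le]
  rintro _ ⟨g, rfl⟩
  simpa using det_mem_pow_card (M := H.submatrix id g) fun i j ↦ hH i (g j)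

lemma maximalMinors_eq_span_det (H : Matrix (Fin t) (Fin t) A) :
    maximalMinors H = Ideal.span {H.det} := by
  refine le_antisymm (Ideal.span_le.2 ?_) ?_
  · rintro _ ⟨g, rfl⟩
    rw [SetLike.mem_coe, Ideal.mem_span_singleton]
    have hmul : H.submatrix id g = H * (1 : Matrix (Fin t) (Fin t) A).submatrix id g := by
      simpa using submatrix_mul H 1 id id g Function.bijective_id
    simp only [hmul, det_mul, dvd_mul_right]
  · rw [Ideal.span_singleton_le_iff_mem]
    simpa using det_mem_maximalMinors H id

end MaximalMinors

section HankelMinors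

lemma val_add_val_lt {t n : ℕ} (a : Fin t) (b : Fin n) : (a : ℕ) + b < n + t - 1 := by
  omega

/-- The generic `t × n` Hankel matrix, with entry `X (a + b)` in position `(a, b)`; the paper's
variable `x_i` is `X (i - 1)`. -/
noncomputable def hankelMatrix (R : Type*) [CommSemiring R] (t n : ℕ) :
    Matrix (Fin t) (Fin n) (MvPolynomial (Fin (n + t - 1)) R) :=
  fun a b ↦ X ⟨a + b, val_add_val_lt a b⟩

lemma hankelMatrix_mem_idealOfVars (R : Type*) [CommSemiring R] {t n : ℕ} (a : Fin t)
    (b : Fin n) : hankelMatrix R t n a b ∈ idealOfVars (Fin (n + t - 1)) R :=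
  Ideal.subset_span ⟨_, rfl⟩

/-- A set of indices without consecutive elements: the supports of the leading terms of the
maximal minors of a Hankel matrix are the sparse sets with as many elements as there are rows. -/
def IsSparse {N : ℕ} (S : Finset (Fin N)) : Prop :=
  ∀ u ∈ S, ∀ v ∈ S, (v : ℕ) ≠ u + 1

lemma exists_strictMono_eq_add {t n : ℕ} {s : Fin t → ℕ} (hgap : ∀ i j, i < j → s i + 2 ≤ s j)
    (hlt : ∀ i, s i < n + t - 1) : ∃ g : Fin t → Fin n, StrictMono g ∧ ∀ i, s i = i + g i := by
  have hgap' : ∀ k : ℕ, ∀ i j : Fin t, (j : ℕ) = i + k → s i + 2 * k ≤ s j := by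
    intro k
    induction k with
    | zero => intro i j hij; simp [Fin.ext hij]
    | succ k ih =>
      intro i j hij
      have hik := ih i ⟨i + k, by omega⟩ rfl
      have := hgap ⟨i + k, by omega⟩ j (by rw [Fin.lt_def, hij]; exact Nat.lt_succ_self _)
      omega
  have hlow (i : Fin t) : 2 * (i : ℕ) ≤ s i := by
    have := hgap' i ⟨0, i.pos⟩ i (by simp)
    omega
  have hhigh (i : Fin t) : s i < n + i := by
    have := hgap' (t - 1 - i) i ⟨t - 1, Nat.sub_one_lt_of_lt i.pos⟩ (by simp only; omega)
    have := hlt ⟨t - 1, Nat.sub_one_lt_of_lt i.pos⟩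
    omega
  refine ⟨fun i ↦ ⟨s i - i, by have := hlow i; have := hhigh i; omega⟩, fun i j hij ↦ ?_,
    fun i ↦ (Nat.add_sub_cancel' (by have := hlow i; omega)).symm⟩
  rw [Fin.lt_def] at hij ⊢
  have := hgap' (j - i) i j (by omega)
  have := hlow i
  simp only
  omega

variable {R : Type*} [CommRing R] [Nontrivial R] {t n : ℕ}

theorem exists_minor_monic_and_degree_eq {S : Finset (Fin (n + t - 1))} (hcard : S.card = t)
    (hS : IsSparse S) :
    ∃ g : Fin t → Fin n, MonomialOrder.lex.Monic ((hankelMatrix R t n).submatrix id g).det ∧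
      MonomialOrder.lex.degree ((hankelMatrix R t n).submatrix id g).det =
        ∑ v ∈ S, Finsupp.single v 1 := by
  let s := S.orderEmbOfFin hcard
  have hgap : ∀ i j, i < j → (s i : ℕ) + 2 ≤ s j := by
    intro i j hij
    have hlt : (s i : ℕ) < s j := s.strictMono hij
    have : (s j : ℕ) ≠ s i + 1 :=
      hS _ (S.orderEmbOfFin_mem hcard i) _ (S.orderEmbOfFin_mem hcard j)
    omega
  obtain ⟨g, hg, hsg⟩ := exists_strictMono_eq_add hgap fun i ↦ (s i).2
  let a : Fin t × Fin t → Fin (n + t - 1) := fun x ↦ ⟨x.1 + g x.2, val_add_val_lt _ _⟩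
  have ha : StrictMono a := by
    rintro ⟨i, j⟩ ⟨i', j'⟩ hlt
    rcases Prod.mk_lt_mk.1 hlt with ⟨hi, hj⟩ | ⟨hi, hj⟩
    · exact Nat.add_lt_add_of_lt_of_le hi (hg.monotone hj)
    · exact Nat.add_lt_add_of_le_of_lt hi (hg hj)
  have hminor : (hankelMatrix R t n).submatrix id g = of fun i j ↦ X (a (i, j)) := rfl
  have hdiag : ∑ v ∈ S, Finsupp.single v 1 = ∑ i, Finsupp.single (a (i, i)) 1 := by
    rw [← S.map_orderEmbOfFin_univ hcard, Finset.sum_map]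
    exact Finset.sum_congr rfl fun i _ ↦ congrArg (Finsupp.single · 1) (Fin.ext (hsg i))
  refine ⟨g, ?_⟩
  rw [hminor, hdiag]
  exact monic_and_degree_det_of_X ha

theorem not_maximalMinors_pow_le_of_sparse_family {κ : Type*} [Fintype κ]
    {S : κ → Finset (Fin (n + t - 1))} (hcard : ∀ k, (S k).card = t) (hS : ∀ k, IsSparse (S k))
    {c s q : ℕ} (hcover : ∀ v, (Finset.univ.filter fun k ↦ v ∈ S k).card ≤ c) (hq : s * c < q) :
    ¬ maximalMinors (hankelMatrix R t n) ^ (Fintype.card κ * s) ≤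
      Ideal.span (Set.range fun i ↦ X i ^ q) := by
  choose g hmonic hdeg using fun k ↦ exists_minor_monic_and_degree_eq (R := R) (hcard k) (hS k)
  set f := fun k ↦ ((hankelMatrix R t n).submatrix id (g k)).det
  have hprod : MonomialOrder.lex.Monic (∏ k, f k) := MonomialOrder.Monic.prod fun k _ ↦ hmonic k
  have hprod_mem : ∏ k, f k ∈ maximalMinors (hankelMatrix R t n) ^ Fintype.card κ := by
    simpa using Ideal.prod_mem_prod (s := Finset.univ)
      (I := fun _ ↦ maximalMinors (hankelMatrix R t n)) fun k _ ↦ det_mem_maximalMinors _ (g k)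
  have hprod_deg (v) : MonomialOrder.lex.degree (∏ k, f k) v ≤ c := by
    rw [degree_prod_of_monic fun k _ ↦ hmonic k]
    simpa [hdeg, Finsupp.finsetSum_apply, Finsupp.single_apply] using hcover v
  intro hle
  refine notMem_span_range_X_pow_of_degree_lt hprod.pow (fun v ↦ ?_)
    (hle (pow_mul (maximalMinors (hankelMatrix R t n)) _ s ▸ Ideal.pow_mem_pow hprod_mem s))
  rw [degree_pow_of_monic hprod]
  exact (Nat.mul_le_mul_left s (hprod_deg v)).trans_lt hq

end HankelMinors

section EvenIndices

/-- The indices `0, 2, …, 2t - 2` among `0, …, N - 1`; there are `t` of them if `2t ≤ N + 1`. -/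
def evenIndices (t N : ℕ) : Finset (Fin N) :=
  {v | Even (v : ℕ) ∧ (v : ℕ) < 2 * t}

lemma mem_evenIndices {t N : ℕ} {v : Fin N} :
    v ∈ evenIndices t N ↔ Even (v : ℕ) ∧ (v : ℕ) < 2 * t := by
  simp [evenIndices]

lemma card_evenIndices {t N : ℕ} (h : 2 * t ≤ N + 1) : (evenIndices t N).card = t := by
  refine Finset.card_eq_of_bijective (fun i hi ↦ ⟨2 * i, by omega⟩) (fun v hv ↦ ?_)
    (fun i hi ↦ ?_) fun i j _ _ hij ↦ ?_
  · obtain ⟨⟨k, hk⟩, hlt⟩ := mem_evenIndices.1 hv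
    exact ⟨k, by omega, Fin.ext (by simp only; omega)⟩
  · exact mem_evenIndices.2 ⟨even_two_mul i, by simp only; omega⟩
  · simpa using hij

lemma isSparse_evenIndices (t N : ℕ) : IsSparse (evenIndices t N) := by
  intro u hu v hv huv
  obtain ⟨⟨k, hk⟩, -⟩ := mem_evenIndices.1 hu
  obtain ⟨⟨l, hl⟩, -⟩ := mem_evenIndices.1 hv
  omega

lemma isSparse_map_add_evenIndices {t N : ℕ} [NeZero N] (h : 2 * t ≤ N) (j : Fin N) :
    IsSparse ((evenIndices t N).map (addLeftEmbedding j)) := by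
  simp only [IsSparse, Finset.forall_mem_map, addLeftEmbedding_apply, Fin.val_add_eq_ite]
  intro u hu v hv
  obtain ⟨⟨k, hk⟩, -⟩ := mem_evenIndices.1 hu
  obtain ⟨⟨l, hl⟩, -⟩ := mem_evenIndices.1 hv
  have := (mem_evenIndices.1 hu).2
  have := (mem_evenIndices.1 hv).2
  split_ifs <;> omega

lemma card_filter_mem_map_add {G : Type*} [AddGroup G] [Fintype G] [DecidableEq G]
    (S : Finset G) (v : G) :
    (Finset.univ.filter fun j ↦ v ∈ S.map (addLeftEmbedding j)).card = S.card := by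
  refine Finset.card_equiv ((Equiv.neg G).trans (Equiv.addRight v)) fun j ↦ ?_
  simp [← eq_neg_add_iff_add_eq]

end EvenIndices

section Thresholds

variable {R : Type*} [CommRing R]

lemma maximalMinors_hankelMatrix_pow_le {t n q s : ℕ} (hs : (n + t - 1) * (q - 1) < t * s) :
    maximalMinors (hankelMatrix R t n) ^ s ≤ Ideal.span (Set.range fun i ↦ X i ^ q) :=
  calc maximalMinors (hankelMatrix R t n) ^ s
      ≤ (idealOfVars (Fin (n + t - 1)) R ^ t) ^ s :=
        Ideal.pow_right_mono (maximalMinors_le_pow (hankelMatrix_mem_idealOfVars R)) s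
    _ = idealOfVars (Fin (n + t - 1)) R ^ (t * s) := (pow_mul _ t s).symm
    _ ≤ Ideal.span (Set.range fun i ↦ X i ^ q) :=
        idealOfVars_pow_le_span_range_X_pow (by rwa [Fintype.card_fin])

variable [Nontrivial R]

lemma not_maximalMinors_hankelMatrix_pow_le {t n q s : ℕ} (htn : t ≤ n) (hs : s < q) :
    ¬ maximalMinors (hankelMatrix R t n) ^ s ≤ Ideal.span (Set.range fun i ↦ X i ^ q) := by
  simpa using not_maximalMinors_pow_le_of_sparse_family (R := R) (κ := Unit) (c := 1)
    (fun _ ↦ card_evenIndices (by omega)) (fun _ ↦ isSparse_evenIndices t (n + t - 1))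
    (fun _ ↦ Finset.card_le_univ _) (by rwa [mul_one])

lemma not_maximalMinors_hankelMatrix_pow_mul_le {t n q s : ℕ} (ht : 1 ≤ t) (htn : t < n)
    (hs : s * t < q) :
    ¬ maximalMinors (hankelMatrix R t n) ^ ((n + t - 1) * s) ≤
      Ideal.span (Set.range fun i ↦ X i ^ q) := by
  have : NeZero (n + t - 1) := ⟨by omega⟩
  simpa using not_maximalMinors_pow_le_of_sparse_family (R := R)
    (S := fun j ↦ (evenIndices t (n + t - 1)).map (addLeftEmbedding j))
    (fun _ ↦ by rw [Finset.card_map, card_evenIndices (by omega)])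
    (fun j ↦ isSparse_map_add_evenIndices (by omega) j)
    (fun v ↦ by rw [card_filter_mem_map_add, card_evenIndices (by omega)]) hs

variable {p : ℕ}

theorem hasFThreshold_maximalMinors_hankelMatrix_square [ExpChar R p] (hp : 1 < p) {t : ℕ}
    (ht : 1 ≤ t) :
    HasFThreshold p (maximalMinors (hankelMatrix R t t)) (idealOfVars (Fin (t + t - 1)) R) 1 := by
  refine hasFThreshold_of_bounds hp (C := 1) (fun e ↦ ⟨p ^ e - 1, ?_, ?_⟩) fun e ↦ ⟨p ^ e, ?_, ?_⟩
  · simp [Nat.cast_pred (Nat.pow_pos (n := e) (by omega : 0 < p))]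
  · rw [frobeniusPower_idealOfVars]
    exact not_maximalMinors_hankelMatrix_pow_le le_rfl
      (Nat.sub_one_lt_of_lt (Nat.pow_pos (by omega)))
  · simp
  · rw [maximalMinors_eq_span_det]
    refine span_singleton_pow_le_frobeniusPower ?_ _
    exact Ideal.pow_le_self (by simp; omega)
      (det_mem_pow_card (hankelMatrix_mem_idealOfVars R))

lemma div_sub_one_le_cast_pred_div {t : ℕ} (ht : 0 < t) (q : ℕ) :
    (q : ℝ) / t - 1 ≤ ((q - 1) / t : ℕ) := by
  have hq : q ≤ ((q - 1) / t + 1) * t := by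
    have := Nat.lt_mul_div_succ (q - 1) ht
    rw [mul_comm]
    omega
  rw [sub_le_iff_le_add, div_le_iff₀ (mod_cast ht)]
  exact_mod_cast hq

theorem hasFThreshold_maximalMinors_hankelMatrix_wide [ExpChar R p] (hp : 1 < p) {t n : ℕ}
    (ht : 1 ≤ t) (htn : t < n) :
    HasFThreshold p (maximalMinors (hankelMatrix R t n)) (idealOfVars (Fin (n + t - 1)) R)
      ((n + t - 1 : ℕ) / t) := by
  refine hasFThreshold_of_bounds hp (C := (n + t - 1 : ℕ))
    (fun e ↦ ⟨(n + t - 1) * ((p ^ e - 1) / t), ?_, ?_⟩)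
    fun e ↦ ⟨(n + t - 1) * (p ^ e - 1) / t + 1, ?_, ?_⟩
  · calc ((n + t - 1 : ℕ) / t * p ^ e - (n + t - 1 : ℕ) : ℝ)
        = (n + t - 1 : ℕ) * ((p ^ e : ℕ) / t - 1) := by push_cast; ring
      _ ≤ (n + t - 1 : ℕ) * ((p ^ e - 1) / t : ℕ) := by
        gcongr
        exact div_sub_one_le_cast_pred_div ht _
      _ = ((n + t - 1) * ((p ^ e - 1) / t) : ℕ) := (Nat.cast_mul _ _).symm
  · rw [frobeniusPower_idealOfVars]
    have hpos : 0 < p ^ e := Nat.pow_pos (by omega)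
    have := Nat.div_mul_le_self (p ^ e - 1) t
    exact not_maximalMinors_hankelMatrix_pow_mul_le ht htn (by omega)
  · calc (((n + t - 1) * (p ^ e - 1) / t + 1 : ℕ) : ℝ)
        ≤ ((n + t - 1) * (p ^ e - 1) : ℕ) / t + 1 := by
          push_cast
          gcongr
          exact_mod_cast Nat.cast_div_le
      _ ≤ ((n + t - 1) * p ^ e : ℕ) / t + (n + t - 1 : ℕ) := by
          gcongr
          · exact Nat.sub_le _ _
          · exact_mod_cast (by omega : 1 ≤ n + t - 1)
      _ = (n + t - 1 : ℕ) / t * p ^ e + (n + t - 1 : ℕ) := by push_cast; ring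
  · rw [frobeniusPower_idealOfVars]
    exact maximalMinors_hankelMatrix_pow_le (Nat.lt_mul_div_succ _ ht)

end Thresholds

section HankelRatio

/-- The ratio `(n + t - 2i + 1) / (t - i + 1)`, for `1 ≤ i ≤ t`, of the height of the ideal `I_i` of
`i × i` minors of a generic `t × n` Hankel matrix to `t - i + 1`. -/
noncomputable def hankelRatio (t n i : ℕ) : ℝ :=
  ((n : ℝ) + t - 2 * i + 1) / ((t : ℝ) - i + 1)

lemma hankelRatio_eq_two_add {t n i : ℕ} (hi : i ≤ t) :
    hankelRatio t n i = 2 + ((n : ℝ) - t - 1) / ((t : ℝ) - i + 1) := by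
  have hi' : (i : ℝ) ≤ t := mod_cast hi
  have hne : (t : ℝ) - i + 1 ≠ 0 := by linarith
  rw [hankelRatio]
  field_simp
  ring

lemma inf'_hankelRatio_square {t : ℕ} (ht : 1 ≤ t) :
    (Finset.Icc 1 t).inf' (Finset.nonempty_Icc.2 ht) (hankelRatio t t) = 1 := by
  refine le_antisymm ?_ (Finset.le_inf' _ _ fun i hi ↦ ?_)
  · refine (Finset.inf'_le _ (Finset.right_mem_Icc.2 ht)).trans_eq ?_
    rw [hankelRatio_eq_two_add le_rfl]
    ring
  · have hit := (Finset.mem_Icc.1 hi).2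
    have hit' : (i : ℝ) ≤ t := mod_cast hit
    have : 1 / ((t : ℝ) - i + 1) ≤ 1 := div_le_one_of_le₀ (by linarith) (by linarith)
    rw [hankelRatio_eq_two_add hit, sub_self, zero_sub, neg_div]
    linarith

lemma inf'_hankelRatio_wide {t n : ℕ} (ht : 1 ≤ t) (htn : t < n) :
    (Finset.Icc 1 t).inf' (Finset.nonempty_Icc.2 ht) (hankelRatio t n) = (n + t - 1 : ℕ) / t := by
  have hfirst : hankelRatio t n 1 = (n + t - 1 : ℕ) / t := by
    rw [hankelRatio, Nat.cast_pred (by omega)]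
    push_cast
    ring
  rw [← hfirst]
  refine le_antisymm (Finset.inf'_le _ (Finset.left_mem_Icc.2 ht))
    (Finset.le_inf' _ _ fun i hi ↦ ?_)
  obtain ⟨hi, hit⟩ := Finset.mem_Icc.1 hi
  have hit' : (i : ℝ) ≤ t := mod_cast hit
  have htn' : (t : ℝ) + 1 ≤ n := mod_cast htn
  rw [hankelRatio_eq_two_add ht, hankelRatio_eq_two_add hit]
  gcongr
  linarith

end HankelRatio

theorem hankel_fpt_ideal_general (R : Type*) [CommRing R] (p t n : ℕ) [CharP R p]
    (hp : p.Prime) (ht : 1 ≤ t) (htn : t ≤ n) :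
    HasFThreshold p (maximalMinors (hankelMatrix R t n)) (idealOfVars (Fin (n + t - 1)) R)
      ((Finset.Icc 1 t).inf' (Finset.nonempty_Icc.2 ht) (hankelRatio t n)) := by
  have : Nontrivial R := CharP.nontrivial_of_char_ne_one hp.ne_one
  have : ExpChar R p := .prime hp
  rcases htn.eq_or_lt with rfl | htn
  · rw [inf'_hankelRatio_square ht]
    exact hasFThreshold_maximalMinors_hankelMatrix_square hp.one_lt ht
  · rw [inf'_hankelRatio_wide ht htn]
    exact hasFThreshold_maximalMinors_hankelMatrix_wide hp.one_lt ht htn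

/-- The `F`-pure threshold of the Hankel determinantal ideal `I_t(H)` in the polynomial ring
`F[x_1,...,x_{n+t-1}]` (char `p > 0`) equals `min{(n+t-2i+1)/(t-i+1) : i = 1,...,t}`:
with `ν_e(I) = max{r : I^r ⊄ m^{[p^e]}}`, the limit of `ν_e(I)/p^e` is this minimum. -/
theorem hankel_fpt_ideal (F : Type*) [Field F] (p t n : ℕ) [CharP F p]
    (hp : p.Prime) (ht : 2 ≤ t) (htn : t ≤ n)
    (H : Matrix (Fin t) (Fin n) (MvPolynomial (Fin (n + t - 1)) F))
    (hH : ∀ a b, H a b = X ⟨(a : ℕ) + (b : ℕ), by have := a.2; have := b.2; omega⟩)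
    (I : Ideal (MvPolynomial (Fin (n + t - 1)) F))
    (hI : I = Ideal.span (Set.range fun g : Fin t → Fin n => (H.submatrix id g).det))
    (m : Ideal (MvPolynomial (Fin (n + t - 1)) F))
    (hm : m = Ideal.span (Set.range X)) :
    ∃ ν : ℕ → ℕ,
      (∀ e : ℕ,
        ¬ (I ^ (ν e) ≤ Ideal.span ((fun q => q ^ (p ^ e)) '' (m : Set _))) ∧
        I ^ (ν e + 1) ≤ Ideal.span ((fun q => q ^ (p ^ e)) '' (m : Set _))) ∧
      Tendsto (fun e : ℕ => (ν e : ℝ) / (p ^ e : ℝ)) atTop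
        (nhds ((Finset.Icc 1 t).inf' ⟨1, by simp [Finset.mem_Icc]; omega⟩
          (fun i : ℕ => ((n : ℝ) + t - 2 * i + 1) / ((t : ℝ) - i + 1)))) := by
  obtain rfl : H = hankelMatrix F t n := Matrix.ext hH
  exact hI ▸ hm ▸ hankel_fpt_ideal_general F p t n hp (one_le_two.trans ht) htn
end
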